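/- There exists a W-configuration in ℝ^10, i.e., a set of 66 unit vectors in EuclideanSpace ℝ (Fin 10) whose pairwise inner products lie in {4/15, -1/10, -7/15} and which realizes the intersection numbers of the association scheme W of the Witt 4-(11,5,1) design. -/

import Mathlib

open RealInnerProductSpace

noncomputable section

/-- The three admissible inner product values (angles). -/
def α1 : ℝ := 4/15
def α2 : ℝ := -1/10
def α3 : ℝ := -7/15

/-- The three admissible angles, indexed. -/
def wAngle : Fin 3 → ℝ := ![α1, α2, α3]

/-- The intersection numbers `p^k_{ij}` of the association scheme `W` of the
Witt 4-(11,5,1) design (index `k` first, then row `i`, column `j`). -/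
def wP : Fin 3 → Fin 3 → Fin 3 → ℕ :=
  ![![![15,10,4], ![10,4,6], ![4,6,5]],
    ![![15,6,9], ![6,10,3], ![9,3,3]],
    ![![8,12,10], ![12,4,4], ![10,4,0]]]

/-- A `W`-configuration: 66 unit vectors in ℝ^10 whose pairwise inner products
lie in `{α1, α2, α3}`, realizing the valencies 30, 20, 15 and the intersection
numbers `p^k_{ij}` of the association scheme `W` of the Witt 4-(11,5,1)
design. -/
def IsWConfig (X : Set (EuclideanSpace ℝ (Fin 10))) : Prop :=
  X.ncard = 66 ∧ (∀ u ∈ X, ‖u‖ = 1) ∧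
  (∀ u ∈ X, ∀ v ∈ X, u ≠ v → ⟪u, v⟫ ∈ ({α1, α2, α3} : Set ℝ)) ∧
  (∀ u ∈ X, {v | v ∈ X ∧ ⟪u, v⟫ = α1}.ncard = 30 ∧
            {v | v ∈ X ∧ ⟪u, v⟫ = α2}.ncard = 20 ∧
            {v | v ∈ X ∧ ⟪u, v⟫ = α3}.ncard = 15) ∧
  (∀ u ∈ X, ∀ v ∈ X, u ≠ v → ∀ k i j : Fin 3, ⟪u, v⟫ = wAngle k →
    {w | w ∈ X ∧ ⟪u, w⟫ = wAngle i ∧ ⟪w, v⟫ = wAngle j}.ncard = wP k i j)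

/-!
Every Steiner system `S(4, 5, 11)` yields a `W`-configuration. For subsets `P`, `Q` of the point set
of a `4`-design and `i + j ≤ 4`, the moment `∑ B, C(|P ∩ B|, i) * C(|Q ∩ B|, j)` counts the triples
of an `i`-subset of `P`, a `j`-subset of `Q` and a block through both, so it depends only on `|P|`,
`|Q|` and `|P ∩ Q|`. With `Q = ∅` this determines how many blocks meet a given block in `a` points,
and only `a = 1, 2, 3` occur for distinct blocks. The numbers of blocks meeting `P` and `Q` in `a`
and `b` points, with `a, b ∈ {1, 2, 3}`, are then determined by the nine moments with `i, j ≤ 2`,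
because the matrix of binomial coefficients is invertible, and they are the numbers `wP`.

The vectors are the indicator vectors of the blocks, projected to the hyperplane of `ℝ^11`
orthogonal to the all-ones vector and normalized; those of the blocks `B` and `C` then have inner
product `(11 |B ∩ C| - 25) / 30`. A system `S(4, 5, 11)` is given by two orbits on the residues
modulo `11`; it suffices to check that its `66` blocks pairwise share at most three points, since
`66 * C(5, 4) = C(11, 4)`.
-/

open Finset

section Counting

variable {α : Type*} [DecidableEq α]

theorem card_filter_card_inter_eq_and_card_sdiff_eq (s t : Finset α) (i j : ℕ) :
    #{u ∈ powersetCard (i + j) s | #(u ∩ t) = i ∧ #(u \ t) = j} =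
      (#(s ∩ t)).choose i * (#(s \ t)).choose j := by
  have hunion {v w : Finset α} (hv : v ⊆ s ∩ t) (hw : w ⊆ s \ t) :
      (v ∪ w) ∩ t = v ∧ (v ∪ w) \ t = w := by
    have hvt := (subset_inter_iff.mp hv).2
    have hwt := (subset_sdiff.mp hw).2
    rw [union_inter_distrib_right, inter_eq_left.mpr hvt, disjoint_iff_inter_eq_empty.mp hwt,
      union_empty, union_sdiff_distrib, sdiff_eq_empty_iff_subset.mpr hvt,
      sdiff_eq_self_of_disjoint hwt, empty_union]
    exact ⟨rfl, rfl⟩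
  rw [← card_powersetCard, ← card_powersetCard, ← card_product]
  refine card_nbij' (fun u => (u ∩ t, u \ t)) (fun p => p.1 ∪ p.2) ?_ ?_ ?_ ?_
  · intro u hu
    obtain ⟨hu, hi, hj⟩ := mem_filter.mp hu
    have hus := (mem_powersetCard.mp hu).1
    exact mem_product.mpr ⟨mem_powersetCard.mpr ⟨inter_subset_inter_right hus, hi⟩,
      mem_powersetCard.mpr ⟨sdiff_subset_sdiff hus le_rfl, hj⟩⟩
  · intro p hp
    obtain ⟨⟨hv, hi⟩, hw, hj⟩ :=
      (mem_product.mp hp).imp mem_powersetCard.mp mem_powersetCard.mp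
    have hsub : p.1 ∪ p.2 ⊆ s :=
      union_subset (hv.trans inter_subset_left) (hw.trans sdiff_subset)
    obtain ⟨hinter, hsdiff⟩ := hunion hv hw
    have hcard := card_inter_add_card_sdiff (p.1 ∪ p.2) t
    rw [hinter, hsdiff, hi, hj] at hcard
    exact mem_filter.mpr ⟨mem_powersetCard.mpr ⟨hsub, hcard.symm⟩,
      by rw [hinter, hi], by rw [hsdiff, hj]⟩
  · intro u _
    exact (union_comm _ _).trans (sdiff_union_inter u t)
  · intro p hp
    obtain ⟨⟨hv, -⟩, hw, -⟩ :=
      (mem_product.mp hp).imp mem_powersetCard.mp mem_powersetCard.mp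
    exact Prod.ext_iff.mpr (hunion hv hw)

theorem sum_powersetCard_card_inter_card_sdiff (s t : Finset α) (n : ℕ) (f : ℕ × ℕ → ℕ) :
    ∑ u ∈ powersetCard n s, f (#(u ∩ t), #(u \ t)) =
      ∑ p ∈ antidiagonal n, (#(s ∩ t)).choose p.1 * (#(s \ t)).choose p.2 * f p := by
  have hmaps : ∀ u ∈ powersetCard n s, (#(u ∩ t), #(u \ t)) ∈ antidiagonal n := fun u hu => by
    rw [HasAntidiagonal.mem_antidiagonal, card_inter_add_card_sdiff, (mem_powersetCard.mp hu).2]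
  rw [← sum_fiberwise_of_maps_to' hmaps]
  refine sum_congr rfl fun p hp => ?_
  rw [sum_const, smul_eq_mul, ← card_filter_card_inter_eq_and_card_sdiff_eq,
    HasAntidiagonal.mem_antidiagonal.mp hp]
  simp only [Prod.ext_iff]

theorem choose_card_inter (s t : Finset α) (n : ℕ) :
    (#(s ∩ t)).choose n = #{u ∈ powersetCard n s | u ⊆ t} := by
  rw [← card_powersetCard]
  congr 1
  ext u
  simp only [mem_powersetCard, mem_filter, subset_inter_iff]
  tauto

theorem sum_choose_card_inter_mul_choose_card_inter (ℬ : Finset (Finset α)) (s t : Finset α)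
    (i j : ℕ) :
    ∑ B ∈ ℬ, (#(s ∩ B)).choose i * (#(t ∩ B)).choose j =
      ∑ u ∈ powersetCard i s, ∑ v ∈ powersetCard j t, #{B ∈ ℬ | u ∪ v ⊆ B} := by
  simp only [choose_card_inter, card_filter, sum_mul_sum, union_subset_iff, ite_and, ite_mul,
    one_mul, zero_mul]
  rw [sum_comm]
  refine sum_congr rfl fun u _ => ?_
  rw [sum_comm]

end Counting

section BinomialMoments

variable {M : Type*} [AddCancelCommMonoid M] {g g' : ℕ → M}

theorem eq_of_sum_range_choose_smul_eq {n : ℕ}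
    (h : ∀ i < n, ∑ a ∈ range n, a.choose i • g a = ∑ a ∈ range n, a.choose i • g' a) :
    ∀ a < n, g a = g' a := by
  induction n with
  | zero => simp
  | succ n ih =>
    have hchoose (f : ℕ → M) : ∑ a ∈ range n, a.choose n • f a = 0 := sum_eq_zero fun a ha => by
      rw [Nat.choose_eq_zero_of_lt (mem_range.mp ha), zero_smul]
    have htop : g n = g' n := by simpa [sum_range_succ, hchoose] using h n n.lt_succ_self
    have hlt := ih fun i hi => by
      have := h i (hi.trans n.lt_succ_self)
      rwa [sum_range_succ, sum_range_succ, htop, add_left_inj] at this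
    intro a ha
    rcases Nat.lt_succ_iff_lt_or_eq.mp ha with ha | rfl
    exacts [hlt a ha, htop]

-- Pascal's rule turns the moments at `m + 1, m + 2, …` into those at `m, m + 1, …`.
theorem eq_of_sum_range_choose_add_smul_eq {m n : ℕ}
    (h : ∀ i < n, ∑ a ∈ range n, (m + a).choose i • g a =
      ∑ a ∈ range n, (m + a).choose i • g' a) :
    ∀ a < n, g a = g' a := by
  induction m with
  | zero => exact eq_of_sum_range_choose_smul_eq (by simpa using h)
  | succ m ih =>
    refine ih fun i hi => ?_
    induction i with
    | zero => simpa using h 0 hi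
    | succ i ihi =>
      have := h (i + 1) hi
      simp only [Nat.add_right_comm m 1, Nat.choose_succ_succ', add_smul, sum_add_distrib] at this
      rwa [ihi (i.lt_succ_self.trans hi), add_right_inj] at this

theorem eq_of_sum_Ico_choose_smul_eq {m n : ℕ}
    (h : ∀ i < n, ∑ a ∈ Ico m (m + n), a.choose i • g a =
      ∑ a ∈ Ico m (m + n), a.choose i • g' a) :
    ∀ a ∈ Ico m (m + n), g a = g' a := by
  simp only [sum_Ico_eq_sum_range, add_tsub_cancel_left] at h
  intro a ha
  obtain ⟨b, rfl⟩ := Nat.exists_eq_add_of_le (mem_Ico.mp ha).1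
  exact eq_of_sum_range_choose_add_smul_eq (g := fun b => g (m + b)) (g' := fun b => g' (m + b)) h
    b (by simpa using ha)

theorem eq_of_sum_Ico_choose_mul_choose_smul_eq {m n : ℕ} {g g' : ℕ → ℕ → M}
    (h : ∀ i < n, ∀ j < n,
      ∑ a ∈ Ico m (m + n), ∑ b ∈ Ico m (m + n), (a.choose i * b.choose j) • g a b =
        ∑ a ∈ Ico m (m + n), ∑ b ∈ Ico m (m + n), (a.choose i * b.choose j) • g' a b) :
    ∀ a ∈ Ico m (m + n), ∀ b ∈ Ico m (m + n), g a b = g' a b := by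
  simp only [mul_smul, ← smul_sum] at h
  exact fun a ha => eq_of_sum_Ico_choose_smul_eq fun j hj =>
    eq_of_sum_Ico_choose_smul_eq (fun i hi => h i hi j hj) a ha

end BinomialMoments

/-- A `t`-`(v, k, l)` design on the point set `α` (with `v = |α|`), given by its set of blocks:
every block has `k` points and every `t`-set of points lies in exactly `l` blocks. -/
structure IsDesign {α : Type*} [DecidableEq α] (t k l : ℕ) (ℬ : Finset (Finset α)) : Prop where
  card_eq : ∀ ⦃B⦄, B ∈ ℬ → #B = k
  card_filter_subset_eq : ∀ ⦃T⦄, #T = t → #{B ∈ ℬ | T ⊆ B} = l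

/-- The number `λ_s` of blocks of a `t`-`(v, k, l)` design through `s ≤ t` given points. The natural
number division is exact whenever such a design exists and `t ≤ k`. -/
def designIndex (v t k l s : ℕ) : ℕ := l * (v - s).choose (t - s) / (k - s).choose (t - s)

-- Both sides are the moment `∑ B, (#(P ∩ B)).choose r * (#(Q ∩ B)).choose s` of a Steiner system
-- `S(4, 5, 11)` for blocks `P` and `Q` sharing `3 - k` points; on the left, the first two summands
-- come from `B = P` and `B = Q`.
theorem wP_moment : ∀ k r s : Fin 3,
    Nat.choose 5 r * (3 - k.val).choose s + (3 - k.val).choose r * Nat.choose 5 s +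
      ∑ a ∈ Ico 1 4, ∑ b ∈ Ico 1 4,
        (a.choose r * b.choose s) * wP k (Fin.ofNat 3 (3 - a)) (Fin.ofNat 3 (3 - b)) =
      ∑ c ∈ antidiagonal r.val, (3 - k.val).choose c.1 * (2 + k.val).choose c.2 *
        ∑ d ∈ antidiagonal s.val, c.1.choose d.1 * (5 - c.1).choose d.2 *
          designIndex 11 4 5 1 (r.val + d.2) := by
  decide

namespace IsDesign

variable {α : Type*} [DecidableEq α] {t k l : ℕ} {ℬ : Finset (Finset α)}

section Fintype

variable [Fintype α]

theorem of_pairwise_card_inter_lt (hcard : ∀ B ∈ ℬ, #B = k)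
    (hinter : ∀ B ∈ ℬ, ∀ C ∈ ℬ, B ≠ C → #(B ∩ C) < t)
    (htight : #ℬ * k.choose t = (Fintype.card α).choose t) : IsDesign t k 1 ℬ where
  card_eq := hcard
  card_filter_subset_eq := by
    have hle : ∀ T ∈ powersetCard t (univ : Finset α), #{B ∈ ℬ | T ⊆ B} ≤ 1 := by
      intro T hT
      refine card_le_one.mpr fun B hB C hC => ?_
      obtain ⟨hB, hTB⟩ := mem_filter.mp hB
      obtain ⟨hC, hTC⟩ := mem_filter.mp hC
      by_contra hBC
      have hTle := card_le_card (subset_inter hTB hTC)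
      rw [(mem_powersetCard.mp hT).2] at hTle
      exact (hinter B hB C hC hBC).not_ge hTle
    have hsum : ∑ T ∈ powersetCard t (univ : Finset α), #{B ∈ ℬ | T ⊆ B} =
        ∑ T ∈ powersetCard t (univ : Finset α), 1 := by
      calc ∑ T ∈ powersetCard t (univ : Finset α), #{B ∈ ℬ | T ⊆ B}
          = ∑ B ∈ ℬ, #{T ∈ powersetCard t univ | T ⊆ B} := by
            simp only [card_filter]
            exact sum_comm
        _ = #ℬ * k.choose t := by
            simp only [← choose_card_inter, univ_inter]
            rw [sum_congr rfl fun B hB => by rw [hcard B hB], sum_const, smul_eq_mul]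
        _ = _ := by rw [htight, ← card_eq_sum_ones, card_powersetCard, card_univ]
    intro T hT
    exact (sum_eq_sum_iff_of_le hle).mp hsum T (mem_powersetCard.mpr ⟨subset_univ T, hT⟩)

theorem card_filter_subset (h : IsDesign t k l ℬ) (htk : t ≤ k) {S : Finset α} (hS : #S ≤ t) :
    #{B ∈ ℬ | S ⊆ B} = designIndex (Fintype.card α) t k l #S := by
  have hcount : #{B ∈ ℬ | S ⊆ B} * (k - #S).choose (t - #S) =
      l * (Fintype.card α - #S).choose (t - #S) := by
    calc #{B ∈ ℬ | S ⊆ B} * (k - #S).choose (t - #S)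
        = ∑ B ∈ ℬ with S ⊆ B, #{T ∈ powersetCard t univ | S ⊆ T ∧ T ⊆ B} := by
          rw [← smul_eq_mul, ← sum_const]
          refine sum_congr rfl fun B hB => ?_
          obtain ⟨hB, hSB⟩ := mem_filter.mp hB
          rw [← h.card_eq hB, ← card_filter_powersetCard_subset S B t hSB hS]
          congr 1
          ext T
          simp only [mem_filter, mem_powersetCard, subset_univ, true_and]
          tauto
      _ = ∑ T ∈ powersetCard t univ with S ⊆ T, #{B ∈ ℬ | T ⊆ B} := by
          have := sum_card_bipartiteAbove_eq_sum_card_bipartiteBelow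
            (s := {T ∈ powersetCard t univ | S ⊆ T}) (t := {B ∈ ℬ | S ⊆ B}) (· ⊆ ·)
          simp only [bipartiteAbove, bipartiteBelow, filter_filter] at this
          rw [← this]
          refine sum_congr rfl fun T hT => congrArg card (filter_congr fun B _ => ?_)
          exact and_iff_right_of_imp (mem_filter.mp hT).2.trans
      _ = l * (Fintype.card α - #S).choose (t - #S) := by
          rw [sum_congr rfl fun T hT =>
            h.card_filter_subset_eq (mem_powersetCard.mp (mem_filter.mp hT).1).2, sum_const,
            card_filter_powersetCard_subset S univ t (subset_univ S) hS, card_univ, smul_eq_mul,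
            mul_comm]
  exact (Nat.div_eq_of_eq_mul_left (Nat.choose_pos (by omega)) hcount.symm).symm

theorem sum_choose_mul_choose (h : IsDesign t k l ℬ) (htk : t ≤ k) (P Q : Finset α) {i j : ℕ}
    (hij : i + j ≤ t) :
    ∑ B ∈ ℬ, (#(P ∩ B)).choose i * (#(Q ∩ B)).choose j =
      ∑ c ∈ antidiagonal i, (#(P ∩ Q)).choose c.1 * (#(P \ Q)).choose c.2 *
        ∑ r ∈ antidiagonal j, c.1.choose r.1 * (#Q - c.1).choose r.2 *
          designIndex (Fintype.card α) t k l (i + r.2) := by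
  rw [sum_choose_card_inter_mul_choose_card_inter, ← sum_powersetCard_card_inter_card_sdiff P Q i
    fun c => ∑ r ∈ antidiagonal j, c.1.choose r.1 * (#Q - c.1).choose r.2 *
      designIndex (Fintype.card α) t k l (i + r.2)]
  refine sum_congr rfl fun I hI => ?_
  simp only
  rw [← card_sdiff, inter_comm I Q, ← sum_powersetCard_card_inter_card_sdiff Q I j
    fun r => designIndex (Fintype.card α) t k l (i + r.2)]
  refine sum_congr rfl fun J hJ => ?_
  have hcard : #(I ∪ J) = i + #(J \ I) := by
    rw [union_comm, ← card_sdiff_add_card, add_comm, (mem_powersetCard.mp hI).2]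
  have hle : #(J \ I) ≤ j := (card_le_card sdiff_subset).trans_eq (mem_powersetCard.mp hJ).2
  rw [h.card_filter_subset htk (by omega), hcard]

theorem sum_choose (h : IsDesign t k l ℬ) (htk : t ≤ k) (P : Finset α) {i : ℕ} (hi : i ≤ t) :
    ∑ B ∈ ℬ, (#(P ∩ B)).choose i = (#P).choose i * designIndex (Fintype.card α) t k l i := by
  simpa [Nat.sum_antidiagonal_eq_sum_range_succ_mk, sum_range_succ'] using
    h.sum_choose_mul_choose htk P ∅ (j := 0) hi

end Fintype

section BlockIntersections

variable {P Q : Finset α}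

theorem filter_card_inter_eq_singleton (h : IsDesign t k l ℬ) (hP : P ∈ ℬ) :
    {B ∈ ℬ | #(P ∩ B) = k} = {P} := by
  ext B
  simp only [mem_filter, mem_singleton]
  constructor
  · rintro ⟨hB, hcard⟩
    have hPB : P ⊆ B := inter_eq_left.mp
      (eq_of_subset_of_card_le inter_subset_left (by rw [hcard, h.card_eq hP]))
    exact (eq_of_subset_of_card_le hPB (by rw [h.card_eq hP, h.card_eq hB])).symm
  · rintro rfl
    exact ⟨hP, by rw [inter_self, h.card_eq hP]⟩

variable [Fintype α]

theorem card_filter_card_inter_eq (h : IsDesign 4 5 1 ℬ) (hα : Fintype.card α = 11) (hP : P ∈ ℬ)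
    {a : ℕ} (ha : a < 5) : #{B ∈ ℬ | #(P ∩ B) = a} = [0, 15, 20, 30, 0].getD a 0 := by
  have hmaps : ∀ B ∈ ℬ, #(P ∩ B) ∈ range 6 := fun B _ =>
    mem_range.mpr (Nat.lt_succ_iff.mpr ((card_le_card inter_subset_left).trans_eq (h.card_eq hP)))
  have hmoment (i : ℕ) (hi : i ≤ 4) :
      ∑ a ∈ range 5, #{B ∈ ℬ | #(P ∩ B) = a} * a.choose i + Nat.choose 5 i =
        Nat.choose 5 i * designIndex 11 4 5 1 i := by
    have hsum := h.sum_choose (by norm_num) P hi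
    rw [hα, h.card_eq hP, ← sum_fiberwise_of_maps_to' hmaps fun a => a.choose i] at hsum
    simp only [sum_const, smul_eq_mul] at hsum
    rwa [sum_range_succ, h.filter_card_inter_eq_singleton hP, card_singleton, one_mul] at hsum
  have hval : ∀ i < 5, ∑ a ∈ range 5, [0, 15, 20, 30, 0].getD a 0 * a.choose i + Nat.choose 5 i =
      Nat.choose 5 i * designIndex 11 4 5 1 i := by decide
  refine eq_of_sum_range_choose_smul_eq (n := 5)
    (g := fun a => #{B ∈ ℬ | #(P ∩ B) = a}) (g' := fun a => [0, 15, 20, 30, 0].getD a 0)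
    (fun i hi => ?_) a ha
  simp only [smul_eq_mul, mul_comm (Nat.choose _ i)]
  exact Nat.add_right_cancel ((hmoment i (by omega)).trans (hval i hi).symm)

theorem card_inter_mem (h : IsDesign 4 5 1 ℬ) (hα : Fintype.card α = 11) (hP : P ∈ ℬ)
    (hQ : Q ∈ ℬ) (hPQ : P ≠ Q) : #(P ∩ Q) ∈ Ico 1 4 := by
  have hle : #(P ∩ Q) ≤ 5 := (card_le_card inter_subset_left).trans_eq (h.card_eq hP)
  have hne : #(P ∩ Q) ≠ 5 := fun h5 => by
    have hmem : Q ∈ ({B ∈ ℬ | #(P ∩ B) = 5} : Finset _) := mem_filter.mpr ⟨hQ, h5⟩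
    rw [h.filter_card_inter_eq_singleton hP] at hmem
    exact hPQ (mem_singleton.mp hmem).symm
  have hpos : 0 < #{B ∈ ℬ | #(P ∩ B) = #(P ∩ Q)} := card_pos.mpr ⟨Q, mem_filter.mpr ⟨hQ, rfl⟩⟩
  rw [h.card_filter_card_inter_eq hα hP (by omega)] at hpos
  interval_cases #(P ∩ Q) <;> simp at hpos hne ⊢

theorem sum_card_inter_card_inter (h : IsDesign 4 5 1 ℬ) (hα : Fintype.card α = 11) (hP : P ∈ ℬ)
    (hQ : Q ∈ ℬ) (hPQ : P ≠ Q) (f : ℕ → ℕ → ℕ) :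
    ∑ B ∈ ℬ, f #(P ∩ B) #(Q ∩ B) = f 5 #(P ∩ Q) + f #(P ∩ Q) 5 +
      ∑ a ∈ Ico 1 4, ∑ b ∈ Ico 1 4, f a b * #{B ∈ ℬ | #(P ∩ B) = a ∧ #(Q ∩ B) = b} := by
  have hmem : ∀ B ∈ (ℬ.erase P).erase Q,
      (#(P ∩ B), #(Q ∩ B)) ∈ Ico 1 4 ×ˢ Ico 1 4 := fun B hB => by
    obtain ⟨hBQ, hBP, hB⟩ := by simpa only [mem_erase] using hB
    exact mem_product.mpr ⟨h.card_inter_mem hα hP hB hBP.symm, h.card_inter_mem hα hQ hB hBQ.symm⟩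
  rw [← add_sum_erase ℬ _ hP, ← add_sum_erase _ _ (mem_erase.mpr ⟨hPQ.symm, hQ⟩),
    inter_self, inter_self, inter_comm Q P, h.card_eq hP, h.card_eq hQ, ← add_assoc,
    ← sum_fiberwise_of_maps_to' hmem fun c => f c.1 c.2, sum_product]
  congr 1
  refine sum_congr rfl fun a ha => sum_congr rfl fun b hb => ?_
  have hne5 {n : ℕ} (hn : n ∈ Ico 1 4) : 5 ≠ n := by
    rintro rfl
    simp at hn
  rw [sum_const, smul_eq_mul, mul_comm, filter_erase, filter_erase, erase_eq_of_notMem,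
    erase_eq_of_notMem]
  · simp only [Prod.ext_iff]
  · simp [h.card_eq hP, Prod.ext_iff, hne5 ha]
  · simp [h.card_eq hQ, Prod.ext_iff, hne5 hb]

theorem card_filter_card_inter_card_inter_eq_wP (h : IsDesign 4 5 1 ℬ)
    (hα : Fintype.card α = 11) (hP : P ∈ ℬ) (hQ : Q ∈ ℬ) {k : Fin 3} (hPQ : #(P ∩ Q) = 3 - k.val)
    (i j : Fin 3) :
    #{B ∈ ℬ | #(P ∩ B) = 3 - i.val ∧ #(Q ∩ B) = 3 - j.val} = wP k i j := by
  have hne : P ≠ Q := by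
    rintro rfl
    rw [inter_self, h.card_eq hP] at hPQ
    omega
  have hsdiff : #(P \ Q) = 2 + k.val := by
    have := card_inter_add_card_sdiff P Q
    rw [h.card_eq hP] at this
    omega
  have hmoment : ∀ r < 3, ∀ s < 3,
      ∑ a ∈ Ico 1 4, ∑ b ∈ Ico 1 4,
        (a.choose r * b.choose s) • #{B ∈ ℬ | #(P ∩ B) = a ∧ #(Q ∩ B) = b} =
      ∑ a ∈ Ico 1 4, ∑ b ∈ Ico 1 4,
        (a.choose r * b.choose s) • wP k (Fin.ofNat 3 (3 - a)) (Fin.ofNat 3 (3 - b)) := by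
    intro r hr s hs
    have hN := h.sum_choose_mul_choose (by norm_num) P Q (i := r) (j := s) (by omega)
    rw [h.sum_card_inter_card_inter hα hP hQ hne fun a b => a.choose r * b.choose s, hα,
      h.card_eq hQ, hPQ, hsdiff, ← wP_moment k ⟨r, hr⟩ ⟨s, hs⟩] at hN
    exact Nat.add_left_cancel hN
  have hsize (i : Fin 3) : 3 - i.val ∈ Ico 1 4 := mem_Ico.mpr (by omega)
  have hindex : ∀ i : Fin 3, Fin.ofNat 3 (3 - (3 - i.val)) = i := by decide
  have heq := eq_of_sum_Ico_choose_mul_choose_smul_eq (m := 1) (n := 3) hmoment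
    _ (hsize i) _ (hsize j)
  rwa [hindex, hindex] at heq

end BlockIntersections

end IsDesign

section CenteredIndicator

variable {α : Type*} [DecidableEq α] [Fintype α]

/-- The orthogonal projection of the indicator vector of `B` onto the hyperplane orthogonal to the
all-ones vector. -/
def centeredIndicator (B : Finset α) : EuclideanSpace ℝ α :=
  WithLp.toLp 2 fun a => (if a ∈ B then 1 else 0) - (#B : ℝ) / Fintype.card α

theorem centeredIndicator_mem_orthogonal [Nonempty α] (B : Finset α) :
    centeredIndicator B ∈ (ℝ ∙ (WithLp.toLp 2 fun _ => 1 : EuclideanSpace ℝ α))ᗮ := by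
  rw [Submodule.mem_orthogonal_singleton_iff_inner_right, PiLp.inner_apply]
  simp [centeredIndicator, mul_div_cancel₀]

theorem inner_centeredIndicator [Nonempty α] (B C : Finset α) :
    ⟪centeredIndicator B, centeredIndicator C⟫ =
      #(B ∩ C) - (#B : ℝ) * #C / Fintype.card α := by
  have hprod (a : α) : (if a ∈ B then (1 : ℝ) else 0) * (if a ∈ C then 1 else 0) =
      if a ∈ B ∩ C then 1 else 0 := by
    simp only [mem_inter, ite_and, ite_mul, one_mul, zero_mul]
  rw [PiLp.inner_apply]
  simp only [centeredIndicator, RCLike.inner_apply', conj_trivial, sub_mul, mul_sub, hprod,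
    sum_sub_distrib, ← mul_sum, ← sum_mul, sum_boole, filter_univ_mem, sum_const, card_univ,
    nsmul_eq_mul]
  field_simp
  ring

theorem exists_inner_eq_card_inter_sub {n : ℕ} (hα : Fintype.card α = n + 1) :
    ∃ x : Finset α → EuclideanSpace ℝ (Fin n),
      ∀ B C, ⟪x B, x C⟫ = #(B ∩ C) - (#B : ℝ) * #C / (n + 1) := by
  have : Nonempty α := Fintype.card_pos_iff.mp (by omega)
  have : Fact (Module.finrank ℝ (EuclideanSpace ℝ α) = n + 1) :=
    ⟨by rw [finrank_euclideanSpace, hα]⟩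
  have hone : (WithLp.toLp 2 fun _ => 1 : EuclideanSpace ℝ α) ≠ 0 := fun h => by
    simpa using congrArg (fun x => x (Classical.arbitrary α)) h
  refine ⟨fun B => (OrthonormalBasis.fromOrthogonalSpanSingleton n hone).repr
    ⟨centeredIndicator B, centeredIndicator_mem_orthogonal B⟩, fun B C => ?_⟩
  rw [LinearIsometryEquiv.inner_map_map, Submodule.coe_inner, inner_centeredIndicator, hα,
    Nat.cast_succ]

end CenteredIndicator

theorem mem_angles_iff_exists {x : ℝ} : x ∈ ({α1, α2, α3} : Set ℝ) ↔ ∃ k, x = wAngle k := by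
  simp [Fin.exists_fin_succ, wAngle]

theorem div_eq_wAngle_iff (m : ℕ) (k : Fin 3) :
    ((11 : ℝ) * m - 25) / 30 = wAngle k ↔ m = 3 - k.val := by
  have h (a : ℕ) : ((11 : ℝ) * m - 25) / 30 = (11 * a - 25) / 30 ↔ m = a := by
    rw [div_left_inj' (by norm_num), sub_left_inj, mul_right_inj' (by norm_num), Nat.cast_inj]
  rw [← h]
  fin_cases k <;> norm_num [wAngle, α1, α2, α3]

theorem ncard_setOf_mem_image_and {α β : Type*} {f : α → β} {s : Finset α}
    (hf : Set.InjOn f s) (p : β → Prop) [DecidablePred fun a => p (f a)] :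
    {b | b ∈ f '' s ∧ p b}.ncard = #{a ∈ s | p (f a)} := by
  have himage : {b | b ∈ f '' s ∧ p b} = f '' ({a ∈ s | p (f a)} : Finset α) := by
    ext b
    simp only [Set.mem_ofPred_eq, Set.mem_image, mem_coe, mem_filter]
    constructor
    · rintro ⟨⟨a, ha, rfl⟩, hp⟩
      exact ⟨a, ⟨ha, hp⟩, rfl⟩
    · rintro ⟨a, ⟨ha, hp⟩, rfl⟩
      exact ⟨⟨a, ha, rfl⟩, hp⟩
  rw [himage, (hf.mono (coe_subset.mpr (filter_subset _ s))).ncard_image, Set.ncard_coe_finset]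

namespace IsDesign

variable {α E : Type*} [DecidableEq α] {ℬ : Finset (Finset α)} [NormedAddCommGroup E]
  [InnerProductSpace ℝ E]

theorem injOn_of_inner_eq (h : IsDesign 4 5 1 ℬ) {x : Finset α → E}
    (hx : ∀ B ∈ ℬ, ∀ C ∈ ℬ, ⟪x B, x C⟫ = ((11 : ℝ) * #(B ∩ C) - 25) / 30) : Set.InjOn x ℬ := by
  intro B hB C hC hBC
  have hinner := hx B hB B hB
  nth_rw 2 [hBC] at hinner
  rw [hx B hB C hC, inter_self, h.card_eq hB, div_left_inj' (by norm_num), sub_left_inj,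
    mul_right_inj' (by norm_num), Nat.cast_inj] at hinner
  have hmem : C ∈ ({B' ∈ ℬ | #(B ∩ B') = 5} : Finset _) := mem_filter.mpr ⟨hC, hinner⟩
  rw [h.filter_card_inter_eq_singleton hB] at hmem
  exact (mem_singleton.mp hmem).symm

variable [Fintype α]

theorem ncard_inner_eq_wAngle (h : IsDesign 4 5 1 ℬ) (hα : Fintype.card α = 11)
    {x : Finset α → E} (hx : ∀ B ∈ ℬ, ∀ C ∈ ℬ, ⟪x B, x C⟫ = ((11 : ℝ) * #(B ∩ C) - 25) / 30)
    {B : Finset α} (hB : B ∈ ℬ) (k : Fin 3) :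
    {v | v ∈ x '' ℬ ∧ ⟪x B, v⟫ = wAngle k}.ncard = ![30, 20, 15] k := by
  classical
  rw [ncard_setOf_mem_image_and (h.injOn_of_inner_eq hx),
    filter_congr fun C hC => by rw [hx B hB C hC, div_eq_wAngle_iff],
    h.card_filter_card_inter_eq hα hB (by omega)]
  fin_cases k <;> rfl

theorem isWConfig_image (h : IsDesign 4 5 1 ℬ) (hα : Fintype.card α = 11)
    {x : Finset α → EuclideanSpace ℝ (Fin 10)}
    (hx : ∀ B ∈ ℬ, ∀ C ∈ ℬ, ⟪x B, x C⟫ = ((11 : ℝ) * #(B ∩ C) - 25) / 30) :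
    IsWConfig (x '' ℬ) := by
  have hangle {B C : Finset α} (hB : B ∈ ℬ) (hC : C ∈ ℬ) (k : Fin 3) :
      ⟪x B, x C⟫ = wAngle k ↔ #(B ∩ C) = 3 - k.val := by
    rw [hx B hB C hC, div_eq_wAngle_iff]
  refine ⟨?_, ?_, ?_, ?_, ?_⟩
  · rw [(h.injOn_of_inner_eq hx).ncard_image, Set.ncard_coe_finset]
    simpa [hα, designIndex, Nat.choose] using h.card_filter_subset (by norm_num) (S := ∅)
  · rintro _ ⟨B, hB, rfl⟩
    rw [norm_eq_sqrt_real_inner, hx B hB B hB, inter_self, h.card_eq hB]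
    norm_num
  · rintro _ ⟨B, hB, rfl⟩ _ ⟨C, hC, rfl⟩ hBC
    have hsize := mem_Ico.mp (h.card_inter_mem hα hB hC (ne_of_apply_ne x hBC))
    exact mem_angles_iff_exists.mpr
      ⟨Fin.ofNat 3 (3 - #(B ∩ C)), (hangle hB hC _).mpr (by simp only [Fin.ofNat]; omega)⟩
  · rintro _ ⟨B, hB, rfl⟩
    exact ⟨h.ncard_inner_eq_wAngle hα hx hB 0, h.ncard_inner_eq_wAngle hα hx hB 1,
      h.ncard_inner_eq_wAngle hα hx hB 2⟩
  · rintro _ ⟨B, hB, rfl⟩ _ ⟨C, hC, rfl⟩ - k i j hk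
    classical
    rw [ncard_setOf_mem_image_and (h.injOn_of_inner_eq hx)
        fun w => ⟪x B, w⟫ = wAngle i ∧ ⟪w, x C⟫ = wAngle j,
      ← h.card_filter_card_inter_card_inter_eq_wP hα hB hC ((hangle hB hC k).mp hk) i j]
    refine congrArg card (filter_congr fun D hD => ?_)
    rw [hangle hB hD, real_inner_comm, hangle hC hD]

theorem exists_inner_eq (h : IsDesign 4 5 1 ℬ) (hα : Fintype.card α = 11) :
    ∃ x : Finset α → EuclideanSpace ℝ (Fin 10),
      ∀ B ∈ ℬ, ∀ C ∈ ℬ, ⟪x B, x C⟫ = ((11 : ℝ) * #(B ∩ C) - 25) / 30 := by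
  obtain ⟨x, hx⟩ := exists_inner_eq_card_inter_sub (n := 10) hα
  refine ⟨fun B => √(11 / 30) • x B, fun B hB C hC => ?_⟩
  rw [real_inner_smul_left, real_inner_smul_right, ← mul_assoc, Real.mul_self_sqrt (by norm_num),
    hx, h.card_eq hB, h.card_eq hC]
  ring

theorem exists_isWConfig (h : IsDesign 4 5 1 ℬ) (hα : Fintype.card α = 11) :
    ∃ X, IsWConfig X :=
  have ⟨x, hx⟩ := h.exists_inner_eq hα
  ⟨x '' ℬ, h.isWConfig_image hα hx⟩

end IsDesign

/-- The images of a set of residues modulo `11` under the maps `x ↦ a * x + b` with `a` a nonzero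
square, each written as a preimage under the inverse map, which is faster to evaluate. -/
def affineOrbit (S : Finset (ZMod 11)) : Finset (Finset (ZMod 11)) :=
  image₂ (fun a b => ({x | a * (x - b) ∈ S} : Finset (ZMod 11))) {1, 3, 4, 5, 9} univ

/-- The blocks of the Witt design `S(4, 5, 11)` on `ZMod 11`. The orbit of the set of nonzero
squares is the Paley biplane, with `11` blocks; the other orbit has the full length `55`. -/
def wittBlocks : Finset (Finset (ZMod 11)) :=
  affineOrbit {1, 3, 4, 5, 9} ∪ affineOrbit {0, 1, 2, 3, 5}

theorem card_wittBlocks : #wittBlocks = 66 := by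
  decide +kernel

theorem card_eq_of_mem_wittBlocks : ∀ B : wittBlocks, #B.1 = 5 := by
  decide +kernel

theorem card_inter_lt_of_mem_wittBlocks :
    ∀ B C : wittBlocks, B ≠ C → #(B.1 ∩ C.1) < 4 := by
  decide +kernel

theorem isDesign_wittBlocks : IsDesign 4 5 1 wittBlocks := by
  refine .of_pairwise_card_inter_lt (Subtype.forall.mp card_eq_of_mem_wittBlocks)
    (fun B hB C hC hBC => ?_) ?_
  · exact card_inter_lt_of_mem_wittBlocks ⟨B, hB⟩ ⟨C, hC⟩ (Subtype.coe_ne_coe.mp hBC)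
  · rw [card_wittBlocks, ZMod.card]
    decide

/-- There exists a `W`-configuration in ℝ^10. -/
theorem wConfig_exists :
    ∃ X : Set (EuclideanSpace ℝ (Fin 10)), IsWConfig X :=
  isDesign_wittBlocks.exists_isWConfig (ZMod.card 11)
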